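/- Let W be a suitable basis and U an integral basis of A with W = TU for T ∈ K[x]^{n×n}. Let e ∈ K[x] (squarefree) with eW′ = MW, gcd(e, entries of M) = 1, and e_u ∈ K[x] with e_u U′ = M_u U, gcd(e_u, entries of M_u) = 1. Then the set of roots of e in K̄ equals the union of the set of roots of det(T) and the set of roots of e_u; equivalently, e is (up to a unit) the squarefree part of the product det(T)·e_u. -/

import Mathlib

noncomputable section
open scoped Classical

open Polynomial

/-- Termwise derivative (w.r.t. `x`) of a generalized (Hahn/Puiseux) series in `x - a`:
the exponent-`q` coefficient of `P'` is `(q+1)` times the exponent-`(q+1)` coefficient of `P`. -/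
def hderiv {F : Type} [Field F] (P : HahnSeries ℚ F) : HahnSeries ℚ F where
  coeff q := ((q + 1 : ℚ) : F) * P.coeff (q + 1)
  isPWO_support' := by
    have hsub : (Function.support fun q : ℚ => ((q + 1 : ℚ) : F) * P.coeff (q + 1))
        ⊆ (fun q : ℚ => q - 1) '' P.support := by
      intro q hq
      refine ⟨q + 1, ?_, by ring⟩
      intro h0
      simp [Function.mem_support, h0] at hq
    exact (P.isPWO_support.image_of_monotoneOn
      (fun x _ y _ hxy => by simpa using hxy)).mono hsub

/-- The valuation of a generalized (Hahn/Puiseux) series: the least exponent occurring,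
and `⊤` for the zero series. -/
def hval {F : Type} [Field F] (P : HahnSeries ℚ F) : WithTop ℚ :=
  if h : P = 0 then ⊤
  else ((P.isWF_support.min (HahnSeries.support_nonempty_iff.mpr h) : ℚ) : WithTop ℚ)

/-- A series is ramified if some exponent in its support is not an integer. -/
def Ramified {F : Type} [Field F] (P : HahnSeries ℚ F) : Prop :=
  ∃ q ∈ P.support, ∀ z : ℤ, (z : ℚ) ≠ q

/-- The set of fractional (non-integer) exponents occurring in a series. -/
def fracSupport {F : Type} [Field F] (P : HahnSeries ℚ F) : Set ℚ :=
  {q | q ∈ P.support ∧ ∀ z : ℤ, (z : ℚ) ≠ q}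

/-- The minimal fractional exponent `δ(P)` of a series; `⊤` if `P` is not ramified. -/
def delta {F : Type} [Field F] (P : HahnSeries ℚ F) : WithTop ℚ :=
  if h : (fracSupport P).Nonempty then
    (((P.isWF_support.mono (fun q hq => hq.1)).min h : ℚ) : WithTop ℚ)
  else ⊤

/-- A Hahn series over `ℚ` is a Puiseux series if its exponents have a common denominator. -/
def IsPuiseux {F : Type} [Field F] (P : HahnSeries ℚ F) : Prop :=
  ∃ r : ℕ, 0 < r ∧ ∀ q ∈ P.support, ∃ z : ℤ, (z : ℚ) / r = q

/-! ### The algebraic function field `A = K(x)[y]/⟨m⟩` -/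

/-- The canonical image in `A = K(x)[y]/⟨m⟩` of a polynomial `p ∈ K[x]`. -/
def toA {K : Type} [Field K] (m : Polynomial (RatFunc K)) (p : Polynomial K) :
    AdjoinRoot m :=
  algebraMap (RatFunc K) (AdjoinRoot m) (algebraMap (Polynomial K) (RatFunc K) p)

/-- `D` is the derivation on `A = K(x)[y]/⟨m⟩` extending `d/dx` on `K(x)`:
it is additive, satisfies the Leibniz rule, and restricts to `d/dx` on `K[x]`
(hence, being a derivation on a field, on all of `K(x)`). -/
structure IsDerivationOnA {K : Type} [Field K] (m : Polynomial (RatFunc K))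
    (D : AdjoinRoot m → AdjoinRoot m) : Prop where
  map_add : ∀ f g, D (f + g) = D f + D g
  leibniz : ∀ f g, D (f * g) = f * D g + g * D f
  map_poly : ∀ p : Polynomial K, D (toA m p) = toA m (Polynomial.derivative p)

/-- `W` is a basis of `A` as a vector space over `K(x)`. -/
def IsKxBasis {K : Type} [Field K] {m : Polynomial (RatFunc K)}
    (W : Fin m.natDegree → AdjoinRoot m) : Prop :=
  LinearIndependent (RatFunc K) W ∧ Submodule.span (RatFunc K) (Set.range W) = ⊤

/-- `e W′ = M W` componentwise. -/
def DerivRel {K : Type} [Field K] {m : Polynomial (RatFunc K)}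
    (D : AdjoinRoot m → AdjoinRoot m) (W : Fin m.natDegree → AdjoinRoot m)
    (e : Polynomial K) (M : Matrix (Fin m.natDegree) (Fin m.natDegree) (Polynomial K)) : Prop :=
  ∀ i, toA m e * D (W i) = ∑ j, toA m (M i j) * W j

/-- `gcd(e, m₁₁, …, mₙₙ) = 1`: the only common divisors of `e` and the entries of `M`
are units. -/
def GcdOne {K : Type} [Field K] {n : ℕ}
    (e : Polynomial K) (M : Matrix (Fin n) (Fin n) (Polynomial K)) : Prop :=
  ∀ p : Polynomial K, p ∣ e → (∀ i j, p ∣ M i j) → IsUnit p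

/-! ### Puiseux expansions around a point `a` of the algebraic closure -/

/-- The family of the `n` distinct `K(x)`-embeddings of `A = K(x)[y]/⟨m⟩` into the field of
Puiseux series around a point `a`: each embedding is a ring homomorphism into the Hahn series
field whose values are Puiseux series, sending constants `c ∈ K` to constant series and the
rational function `x` to `a + (x - a)`, i.e. to the series `a + t` where `t` stands
for `x - a`. -/
structure EmbFamily (K F : Type) [Field K] [Field F] [Algebra K F]
    (m : Polynomial (RatFunc K)) (a : F) where
  emb : Fin m.natDegree → (AdjoinRoot m →+* HahnSeries ℚ F)
  emb_injective : Function.Injective emb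
  emb_C : ∀ i (c : K), emb i (toA m (Polynomial.C c)) = HahnSeries.single 0 (algebraMap K F c)
  emb_X : ∀ i, emb i (toA m Polynomial.X) =
    HahnSeries.single 0 a + HahnSeries.single 1 1
  emb_puiseux : ∀ i f, IsPuiseux (emb i f)

/-- The embeddings around `a` are differential homomorphisms: they intertwine the derivation
`D` on `A` with the termwise derivative of series. -/
def IsDiffFamily {K F : Type} [Field K] [Field F] [Algebra K F]
    {m : Polynomial (RatFunc K)} {a : F} (D : AdjoinRoot m → AdjoinRoot m)
    (σ : EmbFamily K F m a) : Prop :=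
  ∀ i f, σ.emb i (D f) = hderiv (σ.emb i f)

/-- `f ∈ A` is locally integral at `a`, i.e. `val_a(f) ≥ 0`: all Puiseux series associated
to `f` around `a` have nonnegative valuation. -/
def LocIntegralAt {K F : Type} [Field K] [Field F] [Algebra K F]
    {m : Polynomial (RatFunc K)} {a : F} (σ : EmbFamily K F m a)
    (f : AdjoinRoot m) : Prop :=
  ∀ i, 0 ≤ hval (σ.emb i f)

/-- `a` is a branch point of `f ∈ A`: one of the Puiseux series associated to `f` around `a`
is ramified. -/
def IsBranchPointOf {K F : Type} [Field K] [Field F] [Algebra K F]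
    {m : Polynomial (RatFunc K)} {a : F} (σ : EmbFamily K F m a)
    (f : AdjoinRoot m) : Prop :=
  ∃ i, Ramified (σ.emb i f)

/-- `f ∈ A` is (globally) integral: locally integral at every point `a` of the algebraic
closure of `K` (given the system `σ` of Puiseux expansions around each point). -/
def IntegralElem {K : Type} [Field K] {m : Polynomial (RatFunc K)}
    (σ : ∀ a : AlgebraicClosure K, EmbFamily K (AlgebraicClosure K) m a)
    (f : AdjoinRoot m) : Prop :=
  ∀ a, LocIntegralAt (σ a) f

/-- `W` is an integral basis of `A`: a `K(x)`-vector-space basis consisting of integral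
elements such that every integral element is a `K[x]`-linear combination of `W`. -/
def IsIntegralBasis {K : Type} [Field K] {m : Polynomial (RatFunc K)}
    (σ : ∀ a : AlgebraicClosure K, EmbFamily K (AlgebraicClosure K) m a)
    (W : Fin m.natDegree → AdjoinRoot m) : Prop :=
  IsKxBasis W ∧ (∀ i, IntegralElem σ (W i)) ∧
    ∀ f, IntegralElem σ f → ∃ c : Fin m.natDegree → Polynomial K,
      f = ∑ i, toA m (c i) * W i

/-- The rational function `r ∈ K(x)` has no pole at `a`: `r = p/q` with `q(a) ≠ 0`. -/
def NoPoleAt {K F : Type} [Field K] [Field F] [Algebra K F] (a : F) (r : RatFunc K) : Prop :=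
  ∃ p q : Polynomial K, Polynomial.aeval a q ≠ 0 ∧
    r * algebraMap (Polynomial K) (RatFunc K) q = algebraMap (Polynomial K) (RatFunc K) p

/-- `W` is a local integral basis of `A` at `a`: a `K(x)`-vector-space basis consisting of
elements that are locally integral at `a`, such that every element of `A` that is locally
integral at `a` is a linear combination of `W` with coefficients in `K(x)_a` (rational
functions without a pole at `a`). -/
def IsLocalIntegralBasisAt {K F : Type} [Field K] [Field F] [Algebra K F]
    {m : Polynomial (RatFunc K)} {a : F} (σ : EmbFamily K F m a)
    (W : Fin m.natDegree → AdjoinRoot m) : Prop :=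
  IsKxBasis W ∧ (∀ i, LocIntegralAt σ (W i)) ∧
    ∀ f, LocIntegralAt σ f → ∃ c : Fin m.natDegree → RatFunc K,
      (∀ i, NoPoleAt a (c i)) ∧ f = ∑ i, algebraMap (RatFunc K) (AdjoinRoot m) (c i) * W i

/-!
Write `′` for the derivation. Comparing `W′` with `(TU)′` in the basis `U` gives the identity
`e_u M T = e (e_u T′ + T M_u)`. Multiplying by the adjugate of `T` on the right and using
`gcd(e, M) = 1`, every root of `e` is a root of `e_u det T`; multiplying on the left and using
`gcd(e_u, M_u) = 1`, every root of `e_u` that is not a root of `det T` is a root of `e`.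

It remains to see that `e(a) ≠ 0` forces `(det T)(a) ≠ 0`. Let `σ_1, …, σ_n` be the series
embeddings at `a`. The determinant `δ = det(σ_i W_j)` is nonzero by Dedekind independence and
satisfies `e δ′ = tr(M) δ` by Jacobi's formula. A series of nonzero valuation has a logarithmic
derivative of valuation `-1`, whereas `tr(M) / e` has nonnegative valuation at `a`, so `δ` has
valuation `0`. Since `δ = det T · det(σ_i U_j)` and the second factor has nonnegative valuation by
integrality of `U`, the valuation of `det T` at `a` cannot be positive.
-/

section DerivationMatrix

open scoped Matrix

variable {k R m n : Type*} [CommRing k] [CommRing R] [Algebra k R] [Fintype n]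

theorem derivation_mulVec (D : Derivation k R R) (M : Matrix m n R) (v : n → R) :
    D ∘ (M *ᵥ v) = M.map D *ᵥ v + M *ᵥ (D ∘ v) := by
  ext i
  simp [Matrix.mulVec, dotProduct, ← Finset.sum_add_distrib, mul_comm, add_comm]

/-- The ring homomorphism `r ↦ r + D r ε` into the dual numbers attached to a derivation `D`;
it differentiates determinants by functoriality. -/
def derivationToDualNumber (D : Derivation k R R) : R →+* DualNumber R where
  toFun r := TrivSqZeroExt.inl r + TrivSqZeroExt.inr (D r)
  map_one' := by simp
  map_mul' r s := by ext <;> simp [mul_comm]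
  map_zero' := by simp
  map_add' r s := by ext <;> simp

theorem derivation_det_of_map_eq_mul [DecidableEq n] (D : Derivation k R R) {A N : Matrix n n R}
    (h : A.map D = N * A) : D A.det = N.trace * A.det := by
  let ι : R →+* DualNumber R := TrivSqZeroExt.inlHom R R
  have factor : (derivationToDualNumber D).mapMatrix A =
      (1 + (DualNumber.eps : DualNumber R) • ι.mapMatrix N) * ι.mapMatrix A := by
    rw [add_mul, one_mul, smul_mul_assoc, ← map_mul, ← h]
    ext i j <;> simp [derivationToDualNumber, ι]
  have det_factor := congrArg Matrix.det factor
  have trace_map : (ι.mapMatrix N).trace = ι N.trace := (AddMonoidHom.map_trace ι N).symm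
  rw [Matrix.det_mul, Matrix.det_one_add_smul, trace_map, ← RingHom.map_det, ← RingHom.map_det]
    at det_factor
  simpa [derivationToDualNumber, ι, pow_two]
    using congrArg TrivSqZeroExt.snd det_factor

end DerivationMatrix

section ChangeOfBasis

open scoped Matrix

variable {R A m n : Type*} [CommRing R] [CommRing A] [Algebra R A] [Fintype n]

theorem mulVec_map_algebraMap_injective {U : n → A} (hU : LinearIndependent R U) :
    Function.Injective fun P : Matrix m n R => P.map (algebraMap R A) *ᵥ U := by
  intro P Q hPQ
  funext i
  refine hU.fintypeLinearCombination_injective ?_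
  simpa [Fintype.linearCombination_apply, Algebra.smul_def, Matrix.mulVec, dotProduct]
    using congrFun hPQ i

theorem smul_mul_eq_smul_of_derivation_eq_mulVec [Fintype m] {k : Type*} [CommRing k] [Algebra k A]
    (D : Derivation k A A) {δ : R → R} (hδ : ∀ r, D (algebraMap R A r) = algebraMap R A (δ r))
    {W : m → A} {U : n → A} {e eu : R} {M : Matrix m m R} {Mu : Matrix n n R} {T : Matrix m n R}
    (hW : algebraMap R A e • (D ∘ W) = M.map (algebraMap R A) *ᵥ W)
    (hU : LinearIndependent R U)
    (hDU : algebraMap R A eu • (D ∘ U) = Mu.map (algebraMap R A) *ᵥ U)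
    (hWT : W = T.map (algebraMap R A) *ᵥ U) :
    eu • (M * T) = e • (eu • T.map δ + T * Mu) := by
  set φ := algebraMap R A
  have hDT : (T.map φ).map D = (T.map δ).map φ := by
    ext i j
    exact hδ _
  have map_smul (r : R) (P : Matrix m n R) : (r • P).map φ = φ r • P.map φ := by
    ext i j
    simp
  apply mulVec_map_algebraMap_injective hU
  calc (eu • (M * T)).map φ *ᵥ U
      = φ eu • (M.map φ *ᵥ W) := by
        rw [map_smul, Matrix.map_mul, Matrix.smul_mulVec, hWT, Matrix.mulVec_mulVec]
    _ = φ e • φ eu • (D ∘ W) := by rw [← hW, smul_comm]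
    _ = φ e • (φ eu • ((T.map δ).map φ *ᵥ U) + T.map φ *ᵥ (Mu.map φ *ᵥ U)) := by
        rw [hWT, derivation_mulVec, hDT, smul_add, ← Matrix.mulVec_smul (T.map φ), hDU]
    _ = (e • (eu • T.map δ + T * Mu)).map φ *ᵥ U := by
        rw [map_smul, Matrix.map_add _ (map_add φ), map_smul, Matrix.map_mul, Matrix.smul_mulVec,
          Matrix.add_mulVec, Matrix.smul_mulVec, Matrix.mulVec_mulVec]

end ChangeOfBasis

theorem det_algHom_apply_ne_zero {k A L n : Type*} [CommRing k] [CommRing A] [CommRing L]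
    [IsDomain L] [Algebra k A] [Algebra k L] [Fintype n] [DecidableEq n] {σ : n → A →ₐ[k] L}
    (hσ : Function.Injective σ) {W : n → A} (hW : Submodule.span k (Set.range W) = ⊤) :
    (Matrix.of fun j i => σ i (W j)).det ≠ 0 := by
  intro hdet
  obtain ⟨g, hg, hgW⟩ := Matrix.exists_mulVec_eq_zero_iff.mpr hdet
  have hli := (linearIndependent_toLinearMap k A L).comp σ hσ
  have hsum : ∑ i, g i • (σ i).toLinearMap = 0 := by
    refine LinearMap.ext_on_range hW fun j => ?_
    simpa [Matrix.mulVec, dotProduct, mul_comm] using congrFun hgW j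
  exact hg (funext (Fintype.linearIndependent_iff.mp hli g hsum))

theorem det_mem_subring {R n : Type*} [CommRing R] [Fintype n] [DecidableEq n] (S : Subring R)
    {A : Matrix n n R} (hA : ∀ i j, A i j ∈ S) : A.det ∈ S := by
  rw [Matrix.det_apply']
  exact sum_mem fun p _ => mul_mem (intCast_mem S _) (prod_mem fun i _ => hA _ _)

section HahnSeries

section WeightDerivation

variable {Γ R : Type*} [AddCommMonoid Γ] [PartialOrder Γ] [IsOrderedCancelAddMonoid Γ] [CommRing R]

/-- The derivation `∑ c_g t^g ↦ ∑ w(g) c_g t^g` of Hahn series given by an additive weight `w`; for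
exponents in `ℚ` and `w` the inclusion into the coefficients this is the Euler operator `t d/dt`.
It is only recorded to be `ℤ`-linear, so that it can be multiplied by series. -/
def eulerDerivation (w : Γ →+ R) : Derivation ℤ (HahnSeries Γ R) (HahnSeries Γ R) :=
  Derivation.mk'
    (AddMonoidHom.toIntLinearMap
      { toFun P :=
          { coeff := fun g => w g * P.coeff g
            isPWO_support' := P.isPWO_support.mono fun g hg h => hg (by simp [h]) }
        map_zero' := by ext; simp
        map_add' P Q := by ext; simp [mul_add] })
    fun P Q => by
      ext g
      rw [smul_eq_mul, smul_eq_mul, mul_comm Q, HahnSeries.coeff_add,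
        HahnSeries.coeff_mul_right' Q.isPWO_support fun _ hh h' => hh (mul_eq_zero_of_right _ h'),
        HahnSeries.coeff_mul_left' P.isPWO_support fun _ hh h' => hh (mul_eq_zero_of_right _ h'),
        ← Finset.sum_add_distrib]
      change w g * (P * Q).coeff g = _
      rw [HahnSeries.coeff_mul, Finset.mul_sum]
      refine Finset.sum_congr rfl fun ij hij => ?_
      change _ = P.coeff ij.1 * (w ij.2 * Q.coeff ij.2) + w ij.1 * P.coeff ij.1 * Q.coeff ij.2
      rw [← (Finset.mem_antidiagonal.mp hij).2.2, map_add]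
      ring

@[simp]
theorem coeff_eulerDerivation (w : Γ →+ R) (P : HahnSeries Γ R) (g : Γ) :
    (eulerDerivation w P).coeff g = w g * P.coeff g := rfl

/-- The derivation `∑ c_g t^g ↦ ∑ w(g) c_g t^(g+s)` of Hahn series; the shift `s = -1` turns the
Euler operator `t d/dt` into `d/dt`. -/
def shiftedEulerDerivation (w : Γ →+ R) (s : Γ) :
    Derivation ℤ (HahnSeries Γ R) (HahnSeries Γ R) :=
  HahnSeries.single s (1 : R) • eulerDerivation w

theorem coeff_shiftedEulerDerivation {Γ : Type*} [AddCommGroup Γ] [PartialOrder Γ]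
    [IsOrderedCancelAddMonoid Γ] (w : Γ →+ R) (s : Γ) (P : HahnSeries Γ R) (g : Γ) :
    (shiftedEulerDerivation w s P).coeff g = w (g - s) * P.coeff (g - s) := by
  simp [shiftedEulerDerivation, HahnSeries.coeff_single_mul]

end WeightDerivation

section Valuation

variable {Γ R : Type*} [AddCommMonoid Γ] [LinearOrder Γ] [IsOrderedCancelAddMonoid Γ] [CommRing R]
  [NoZeroDivisors R] {w : Γ →+ R} {s : Γ}

theorem orderTop_eulerDerivation (hw : Function.Injective w) {P : HahnSeries Γ R}
    (hP : P.orderTop ≠ 0) : (eulerDerivation w P).orderTop = P.orderTop := by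
  obtain rfl | hP0 := eq_or_ne P 0
  · simp
  obtain ⟨v, hv⟩ := WithTop.ne_top_iff_exists.mp (HahnSeries.orderTop_ne_top.mpr hP0)
  rw [← hv] at hP ⊢
  refine HahnSeries.orderTop_eq_of_le ?_ fun g hg => ?_
  · have hwv : w v ≠ 0 := (map_ne_zero_iff w hw).mpr (by exact_mod_cast hP)
    exact mul_ne_zero hwv (HahnSeries.coeff_orderTop_ne hv.symm)
  · rw [← WithTop.coe_le_coe, hv]
    exact HahnSeries.orderTop_le_of_coeff_ne_zero (right_ne_zero_of_mul hg)

variable [Nontrivial R]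

theorem orderTop_shiftedEulerDerivation (hw : Function.Injective w) {P : HahnSeries Γ R}
    (hP : P.orderTop ≠ 0) : (shiftedEulerDerivation w s P).orderTop = s + P.orderTop := by
  rw [shiftedEulerDerivation, Derivation.smul_apply, smul_eq_mul, HahnSeries.orderTop_mul,
    HahnSeries.orderTop_single one_ne_zero, orderTop_eulerDerivation hw hP]

theorem orderTop_eq_zero_of_mul_shiftedEulerDerivation_eq (hw : Function.Injective w) (hs : s < 0)
    {f g δ : HahnSeries Γ R} (hδ : δ ≠ 0) (hf : f.orderTop = 0) (hg : 0 ≤ g.orderTop)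
    (h : f * shiftedEulerDerivation w s δ = g * δ) : δ.orderTop = 0 := by
  by_contra hδ0
  have hle : δ.orderTop ≤ s + δ.orderTop := calc
    δ.orderTop ≤ g.orderTop + δ.orderTop := le_add_of_nonneg_left hg
    _ = (f * shiftedEulerDerivation w s δ).orderTop := by rw [h, HahnSeries.orderTop_mul]
    _ = s + δ.orderTop := by
      rw [HahnSeries.orderTop_mul, hf, zero_add, orderTop_shiftedEulerDerivation hw hδ0]
  obtain ⟨v, hv⟩ := WithTop.ne_top_iff_exists.mp (HahnSeries.orderTop_ne_top.mpr hδ)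
  rw [← hv, ← WithTop.coe_add, WithTop.coe_le_coe, le_add_iff_nonneg_left] at hle
  exact hs.not_ge hle

theorem orderTop_det_eq_zero_of_smul_map_shiftedEulerDerivation_eq {n : Type*} [Fintype n]
    [DecidableEq n] (hw : Function.Injective w) (hs : s < 0) {f : HahnSeries Γ R}
    {A N : Matrix n n (HahnSeries Γ R)} (hA : A.det ≠ 0) (hf : f.orderTop = 0)
    (hN : 0 ≤ N.trace.orderTop) (h : f • A.map (shiftedEulerDerivation w s) = N * A) :
    A.det.orderTop = 0 :=
  orderTop_eq_zero_of_mul_shiftedEulerDerivation_eq hw hs hA hf hN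
    (derivation_det_of_map_eq_mul (f • shiftedEulerDerivation w s) h)

end Valuation

theorem orderTop_pos_iff_coeff_zero_eq_zero {Γ R : Type*} [PartialOrder Γ] [Zero Γ] [Zero R]
    {P : HahnSeries Γ R} (hP : 0 ≤ P.orderTop) : 0 < P.orderTop ↔ P.coeff 0 = 0 := by
  refine ⟨fun h => HahnSeries.coeff_eq_zero_of_lt_orderTop h, fun h => hP.lt_of_ne ?_⟩
  exact fun h0 => HahnSeries.coeff_orderTop_ne h0.symm h

theorem orderTop_det_nonneg {Γ R n : Type*} [AddCommGroup Γ] [LinearOrder Γ]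
    [IsOrderedCancelAddMonoid Γ] [CommRing R] [IsDomain R] [Fintype n] [DecidableEq n]
    {A : Matrix n n (HahnSeries Γ R)} (hA : ∀ i j, 0 ≤ (A i j).orderTop) : 0 ≤ A.det.orderTop := by
  have mem_iff (P : HahnSeries Γ R) : P ∈ (HahnSeries.addVal Γ R).toValuation.integer ↔
      0 ≤ P.orderTop := by
    rw [Valuation.mem_integer_iff]
    exact Iff.rfl
  rw [← mem_iff]
  exact det_mem_subring _ fun i j => (mem_iff _).mpr (hA i j)

end HahnSeries

section Field

variable {F : Type} [Field F]

theorem hval_eq_orderTop (P : HahnSeries ℚ F) : hval P = P.orderTop := by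
  unfold hval
  split_ifs with hP
  · simp [hP]
  · rw [HahnSeries.orderTop_of_ne_zero hP]

theorem coe_shiftedEulerDerivation_castHom_neg_one [CharZero F] :
    ⇑(shiftedEulerDerivation (Rat.castHom F : ℚ →+ F) (-1)) = hderiv := by
  ext P q
  simp [coeff_shiftedEulerDerivation, hderiv]

end Field

/-- The expansion of a polynomial `p ∈ K[x]` at `a` as a series in `t = x - a`. -/
def taylorExpansion {K F : Type*} [Field K] [Field F] [Algebra K F] (a : F) :
    K[X] →+* HahnSeries ℚ F :=
  (HahnSeries.ofPowerSeries ℚ F).comp (Polynomial.coeToPowerSeries.ringHom.comp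
    ((taylorAlgHom a : F[X] →+* F[X]).comp (mapRingHom (algebraMap K F))))

section TaylorExpansion

variable {K F : Type*} [Field K] [Field F] [Algebra K F] (a : F) (p : K[X])

theorem coeff_zero_taylorExpansion : (taylorExpansion a p).coeff 0 = aeval a p := by
  have h := HahnSeries.ofPowerSeries_apply_coeff (Γ := ℚ)
    (Polynomial.taylor a (p.map (algebraMap K F)) : PowerSeries F) 0
  simpa [taylorExpansion, Polynomial.taylor_coeff_zero] using h

theorem orderTop_taylorExpansion_nonneg : 0 ≤ (taylorExpansion a p).orderTop := by
  have map_nonneg (v : WithTop ℕ) : 0 ≤ v.map (Nat.castOrderEmbedding : ℕ ↪o ℚ) := by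
    cases v with
    | top => simp
    | coe n => exact WithTop.coe_nonneg.mpr n.cast_nonneg
  simp only [taylorExpansion, RingHom.comp_apply, HahnSeries.ofPowerSeries_apply,
    HahnSeries.orderTop_embDomain, map_nonneg]

variable {a p}

theorem orderTop_taylorExpansion_pos_iff :
    0 < (taylorExpansion a p).orderTop ↔ aeval a p = 0 := by
  rw [orderTop_pos_iff_coeff_zero_eq_zero (orderTop_taylorExpansion_nonneg a p),
    coeff_zero_taylorExpansion]

theorem orderTop_taylorExpansion_eq_zero (hp : aeval a p ≠ 0) :
    (taylorExpansion a p).orderTop = 0 :=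
  (orderTop_taylorExpansion_nonneg a p).antisymm'
    (not_lt.mp (mt orderTop_taylorExpansion_pos_iff.mp hp))

end TaylorExpansion

namespace EmbFamily

variable {K F : Type} [Field K] [Field F] [Algebra K F] {m : (RatFunc K)[X]} {a : F}
  (σ : EmbFamily K F m a)

theorem emb_comp_algebraMap (i : Fin m.natDegree) :
    (σ.emb i).comp (algebraMap K[X] (AdjoinRoot m)) = taylorExpansion a := by
  refine Polynomial.ringHom_ext (fun c => ?_) ?_
  · refine (σ.emb_C i c).trans ?_
    simp [taylorExpansion]
  · refine (σ.emb_X i).trans ?_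
    simp [taylorExpansion, add_comm]

theorem emb_toA (i : Fin m.natDegree) (p : K[X]) :
    σ.emb i (toA m p) = taylorExpansion a p :=
  RingHom.congr_fun (σ.emb_comp_algebraMap i) p

theorem emb_comp_algebraMap_ratFunc (i j : Fin m.natDegree) :
    (σ.emb i).comp (algebraMap (RatFunc K) (AdjoinRoot m)) =
      (σ.emb j).comp (algebraMap (RatFunc K) (AdjoinRoot m)) := by
  refine IsLocalization.ringHom_ext (nonZeroDivisors K[X]) ?_
  exact (σ.emb_comp_algebraMap i).trans (σ.emb_comp_algebraMap j).symm

/-- The matrix whose rows are the expansions of `W_1, …, W_n` under the `n` embeddings. -/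
def expansionMatrix (W : Fin m.natDegree → AdjoinRoot m) :
    Matrix (Fin m.natDegree) (Fin m.natDegree) (HahnSeries ℚ F) :=
  Matrix.of fun j i => σ.emb i (W j)

theorem expansionMatrix_sum_toA_mul
    (P : Matrix (Fin m.natDegree) (Fin m.natDegree) K[X])
    (W : Fin m.natDegree → AdjoinRoot m) :
    σ.expansionMatrix (fun i => ∑ j, toA m (P i j) * W j) =
      P.map (taylorExpansion a) * σ.expansionMatrix W := by
  ext1 i j
  simp [expansionMatrix, Matrix.mul_apply, σ.emb_toA]

theorem det_expansionMatrix_ne_zero {W : Fin m.natDegree → AdjoinRoot m}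
    (hW : Submodule.span (RatFunc K) (Set.range W) = ⊤) : (σ.expansionMatrix W).det ≠ 0 := by
  cases isEmpty_or_nonempty (Fin m.natDegree) with
  | inl h => simp
  | inr h =>
    obtain ⟨o⟩ := h
    let : Algebra (RatFunc K) (HahnSeries ℚ F) :=
      ((σ.emb o).comp (algebraMap (RatFunc K) (AdjoinRoot m))).toAlgebra
    let τ (i : Fin m.natDegree) : AdjoinRoot m →ₐ[RatFunc K] HahnSeries ℚ F :=
      { σ.emb i with
        commutes' := RingHom.congr_fun (σ.emb_comp_algebraMap_ratFunc i o) }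
    have hτ : Function.Injective τ := fun i j hij =>
      σ.emb_injective (congrArg AlgHom.toRingHom hij)
    exact det_algHom_apply_ne_zero hτ hW

theorem taylorExpansion_smul_map_hderiv {D : AdjoinRoot m → AdjoinRoot m}
    (hσ : IsDiffFamily D σ) {W : Fin m.natDegree → AdjoinRoot m} {e : K[X]}
    {M : Matrix (Fin m.natDegree) (Fin m.natDegree) K[X]} (hrel : DerivRel D W e M) :
    taylorExpansion a e • (σ.expansionMatrix W).map hderiv =
      M.map (taylorExpansion a) * σ.expansionMatrix W := by
  rw [← expansionMatrix_sum_toA_mul]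
  ext1 i j
  simp only [Matrix.smul_apply, Matrix.map_apply, expansionMatrix, Matrix.of_apply, ← hrel i,
    map_mul, emb_toA, hσ j, smul_eq_mul]

theorem orderTop_det_expansionMatrix_nonneg {U : Fin m.natDegree → AdjoinRoot m}
    (hU : ∀ i, LocIntegralAt σ (U i)) : 0 ≤ (σ.expansionMatrix U).det.orderTop :=
  orderTop_det_nonneg fun j i => (hU j i).trans_eq (hval_eq_orderTop _)

variable [CharZero F]

theorem orderTop_det_expansionMatrix {D : AdjoinRoot m → AdjoinRoot m}
    (hσ : IsDiffFamily D σ) {W : Fin m.natDegree → AdjoinRoot m} {e : K[X]}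
    {M : Matrix (Fin m.natDegree) (Fin m.natDegree) K[X]} (hrel : DerivRel D W e M)
    (hW : Submodule.span (RatFunc K) (Set.range W) = ⊤) (he : aeval a e ≠ 0) :
    (σ.expansionMatrix W).det.orderTop = 0 := by
  have trace_map : (M.map (taylorExpansion a)).trace = taylorExpansion a M.trace :=
    (AddMonoidHom.map_trace (taylorExpansion a) M).symm
  refine orderTop_det_eq_zero_of_smul_map_shiftedEulerDerivation_eq (w := (Rat.castHom F : ℚ →+ F))
    Rat.cast_injective neg_one_lt_zero (σ.det_expansionMatrix_ne_zero hW)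
    (orderTop_taylorExpansion_eq_zero he) (N := M.map (taylorExpansion a)) ?_ ?_
  · rw [trace_map]
    exact orderTop_taylorExpansion_nonneg a _
  · rw [coe_shiftedEulerDerivation_castHom_neg_one]
    exact σ.taylorExpansion_smul_map_hderiv hσ hrel

theorem aeval_det_ne_zero {D : AdjoinRoot m → AdjoinRoot m} (hσ : IsDiffFamily D σ)
    {W U : Fin m.natDegree → AdjoinRoot m} {e : K[X]}
    {M T : Matrix (Fin m.natDegree) (Fin m.natDegree) K[X]} (hrel : DerivRel D W e M)
    (hW : Submodule.span (RatFunc K) (Set.range W) = ⊤) (hU : ∀ i, LocIntegralAt σ (U i))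
    (hWT : ∀ i, W i = ∑ j, toA m (T i j) * U j) (he : aeval a e ≠ 0) :
    aeval a T.det ≠ 0 := by
  have hdet : (σ.expansionMatrix W).det =
      taylorExpansion a T.det * (σ.expansionMatrix U).det := by
    rw [funext hWT, expansionMatrix_sum_toA_mul, Matrix.det_mul, RingHom.map_det]
    rfl
  intro hT
  refine (orderTop_taylorExpansion_pos_iff.mpr hT).not_ge ?_
  calc (taylorExpansion a T.det).orderTop
      ≤ (taylorExpansion a T.det).orderTop + (σ.expansionMatrix U).det.orderTop :=
        le_add_of_nonneg_right (σ.orderTop_det_expansionMatrix_nonneg hU)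
    _ = (σ.expansionMatrix W).det.orderTop := by rw [hdet, HahnSeries.orderTop_mul]
    _ ≤ 0 := (σ.orderTop_det_expansionMatrix hσ hrel hW he).le

end EmbFamily

section Derivation

variable {K : Type} [Field K] {m : (RatFunc K)[X]} {D : AdjoinRoot m → AdjoinRoot m}

/-- The map `D` of `IsDerivationOnA`, bundled as a `K`-linear derivation. -/
def IsDerivationOnA.toDerivation (hD : IsDerivationOnA m D) :
    Derivation K (AdjoinRoot m) (AdjoinRoot m) :=
  Derivation.mk'
    { toFun := D
      map_add' := hD.map_add
      map_smul' c f := by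
        have smul_eq (g : AdjoinRoot m) : c • g = toA m (C c) * g := by
          simp [toA, Algebra.smul_def, IsScalarTower.algebraMap_apply K (RatFunc K) (AdjoinRoot m)]
        change D (c • f) = c • D f
        rw [smul_eq, smul_eq, hD.leibniz, hD.map_poly, derivative_C]
        simp [toA] }
    hD.leibniz

theorem smul_mul_eq_smul_of_derivRel (hD : IsDerivationOnA m D)
    {W U : Fin m.natDegree → AdjoinRoot m} {e eu : K[X]}
    {M Mu T : Matrix (Fin m.natDegree) (Fin m.natDegree) K[X]}
    (hrel : DerivRel D W e M) (hU : LinearIndependent (RatFunc K) U) (hrelU : DerivRel D U eu Mu)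
    (hWT : ∀ i, W i = ∑ j, toA m (T i j) * U j) :
    eu • (M * T) = e • (eu • T.map derivative + T * Mu) :=
  smul_mul_eq_smul_of_derivation_eq_mulVec hD.toDerivation hD.map_poly
    (_root_.funext hrel) (hU.restrict_scalars' _) (_root_.funext hrelU) (_root_.funext hWT)

end Derivation

theorem GcdOne.aeval_ne_zero_of_smul_eq {K : Type} {B : Type*} [Field K] [CommRing B] [IsDomain B]
    [Algebra K B] {a : B} {n : ℕ} {e f : K[X]} {M N : Matrix (Fin n) (Fin n) K[X]}
    (hgcd : GcdOne e M) (h : f • M = e • N) (hf : aeval a f ≠ 0) : aeval a e ≠ 0 := by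
  intro he
  obtain ⟨g, hg⟩ := (IsPrincipalIdealRing.principal (RingHom.ker (aeval (R := K) a))).principal
  have dvd_iff (p : K[X]) : g ∣ p ↔ aeval a p = 0 := by
    rw [← Ideal.mem_span_singleton, ← Ideal.submodule_span_eq, ← hg, RingHom.mem_ker]
  have dvd_entry (i j : Fin n) : g ∣ M i j := by
    have hij : f * M i j = e * N i j := congrFun (congrFun h i) j
    have eval_hij := congrArg (aeval a) hij
    rw [map_mul, map_mul, he, zero_mul] at eval_hij
    exact (dvd_iff _).mpr ((mul_eq_zero_iff_left hf).mp eval_hij)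
  have isUnit_g : IsUnit g := hgcd g ((dvd_iff e).mpr he) dvd_entry
  exact one_ne_zero ((map_one (aeval a)).symm.trans ((dvd_iff 1).mp isUnit_g.dvd))

section Adjugate

variable {R n : Type*} [CommRing R] [Fintype n] [DecidableEq n] {c e : R} {M N T : Matrix n n R}

theorem mul_det_smul_eq_smul_mul_adjugate (h : c • (M * T) = e • N) :
    (c * T.det) • M = e • (N * T.adjugate) := by
  rw [← Matrix.smul_mul, ← h, Matrix.smul_mul, Matrix.mul_assoc, Matrix.mul_adjugate,
    Matrix.mul_smul, Matrix.mul_one, mul_smul]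

theorem mul_det_smul_eq_smul_adjugate_mul (h : c • (T * M) = e • N) :
    (c * T.det) • M = e • (T.adjugate * N) := by
  rw [← Matrix.mul_smul, ← h, Matrix.mul_smul, ← Matrix.mul_assoc, Matrix.adjugate_mul,
    Matrix.smul_mul, Matrix.one_mul, mul_smul]

end Adjugate

theorem roots_of_e_eq_union_general {K F : Type} [Field K] [Field F] [CharZero F] [Algebra K F]
    (m : (RatFunc K)[X]) (D : AdjoinRoot m → AdjoinRoot m) (hD : IsDerivationOnA m D)
    {a : F} (σ : EmbFamily K F m a) (hσ : IsDiffFamily D σ)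
    (W U : Fin m.natDegree → AdjoinRoot m) (e eu : K[X])
    (M Mu : Matrix (Fin m.natDegree) (Fin m.natDegree) K[X])
    (hW : IsKxBasis W) (hrel : DerivRel D W e M) (hgcd : GcdOne e M)
    (hU : IsKxBasis U) (hUint : ∀ i, LocIntegralAt σ (U i))
    (hrelU : DerivRel D U eu Mu) (hgcdU : GcdOne eu Mu)
    (T : Matrix (Fin m.natDegree) (Fin m.natDegree) K[X])
    (hWT : ∀ i, W i = ∑ j, toA m (T i j) * U j) :
    aeval a e = 0 ↔ (aeval a T.det = 0 ∨ aeval a eu = 0) := by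
  have hTM : eu • (M * T) = e • (eu • T.map derivative + T * Mu) :=
    smul_mul_eq_smul_of_derivRel hD hrel hU.1 hrelU hWT
  refine ⟨fun he => ?_, fun h => ?_⟩
  · by_contra! h
    exact hgcd.aeval_ne_zero_of_smul_eq (mul_det_smul_eq_smul_mul_adjugate hTM)
      (by rw [map_mul]; exact mul_ne_zero h.2 h.1) he
  · by_contra he
    have hT : aeval a T.det ≠ 0 := σ.aeval_det_ne_zero hσ hrel hW.2 hUint hWT he
    have hTMu : e • (T * Mu) = eu • (M * T - e • T.map derivative) := by
      rw [smul_sub, hTM, smul_add, smul_comm e eu, add_sub_cancel_left]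
    exact hgcdU.aeval_ne_zero_of_smul_eq (mul_det_smul_eq_smul_adjugate_mul hTMu)
      (by rw [map_mul]; exact mul_ne_zero he hT) (h.resolve_left hT)

/-- Let `W` be a suitable basis and `U` an integral basis of `A` with `W = TU`
for `T ∈ K[x]^{n×n}`. Let `e ∈ K[x]` (squarefree) with `eW′ = MW`, `gcd(e, entries of M) = 1`,
and `e_u ∈ K[x]` with `e_u U′ = M_u U`, `gcd(e_u, entries of M_u) = 1`. Then the set of roots
of `e` in `K̄` equals the union of the set of roots of `det(T)` and the set of roots
of `e_u`. -/
theorem roots_of_e_eq_union {K : Type} [Field K] [CharZero K]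
    (m : Polynomial (RatFunc K)) [Fact (Irreducible m)]
    (D : AdjoinRoot m → AdjoinRoot m) (hD : IsDerivationOnA m D)
    (σ : ∀ a : AlgebraicClosure K, EmbFamily K (AlgebraicClosure K) m a)
    (hσ : ∀ a, IsDiffFamily D (σ a))
    (W U : Fin m.natDegree → AdjoinRoot m)
    (e eu : Polynomial K) (M Mu : Matrix (Fin m.natDegree) (Fin m.natDegree) (Polynomial K))
    -- `W` is a suitable basis:
    (hWb : IsKxBasis W) (hrel : DerivRel D W e M) (hgcd : GcdOne e M)
    (hsqf : Squarefree e) (hWint : ∀ i, IntegralElem σ (W i))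
    -- `U` is an integral basis, with `e_u U′ = M_u U`:
    (hU : IsIntegralBasis σ U) (hrelU : DerivRel D U eu Mu) (hgcdU : GcdOne eu Mu)
    -- `W = TU`:
    (T : Matrix (Fin m.natDegree) (Fin m.natDegree) (Polynomial K))
    (hWT : ∀ i, W i = ∑ j, toA m (T i j) * U j) :
    ∀ a : AlgebraicClosure K,
      Polynomial.aeval a e = 0 ↔
        (Polynomial.aeval a T.det = 0 ∨ Polynomial.aeval a eu = 0) := by
  exact fun a => roots_of_e_eq_union_general m D hD (σ a) (hσ a) W U e eu M Mu hWb hrel hgcd hU.1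
    (fun i => hU.2.1 i a) hrelU hgcdU T hWT
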